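/- arXiv:2405.11085 — 5 statements merged into one kernel-verified Lean document; each statement's English description precedes it below -/
import Mathlib

section
/- Let M be a d-dimensional affine continuous VASS all of whose transition matrices are non-negative self-loop matrices. If p(u) →^π q(v) is a run, then for every rational α ∈ (0,1] there is a run p(α·u) →^{α·π} q(α·v). -/
namespace ACVASS

/-- Vectors of rationals indexed by counters. -/
abbrev Vec (d : ℕ) := Fin d → ℚ

/-- A vector is componentwise non-negative (i.e. lies in ℚ₊^d). -/
def NonNeg {d : ℕ} (u : Vec d) : Prop := ∀ i, 0 ≤ u i

/-- Square integer matrices of dimension d. -/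
abbrev Mat (d : ℕ) := Matrix (Fin d) (Fin d) ℤ

/-- Transitions of a d-dimensional affine continuous VASS. -/
abbrev Trans (Q : Type) (d : ℕ) := Q × Mat d × (Fin d → ℤ) × Q

def Trans.src {Q : Type} {d : ℕ} (t : Trans Q d) : Q := t.1
def Trans.mat {Q : Type} {d : ℕ} (t : Trans Q d) : Mat d := t.2.1
def Trans.upd {Q : Type} {d : ℕ} (t : Trans Q d) : Fin d → ℤ := t.2.2.1
def Trans.tgt {Q : Type} {d : ℕ} (t : Trans Q d) : Q := t.2.2.2

/-- Cast an integer matrix to a rational matrix. -/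
def castMat {d : ℕ} (A : Mat d) : Matrix (Fin d) (Fin d) ℚ := A.map (Int.cast)

/-- Cast an integer vector to a rational vector. -/
def castVec {d : ℕ} (b : Fin d → ℤ) : Vec d := fun i => (b i : ℚ)

/-- A d-dimensional affine continuous VASS: a finite set of transitions. -/
structure ACV (Q : Type) (d : ℕ) where
  T : Finset (Trans Q d)

/-- Configurations: a state together with a vector of counter values. -/
abbrev Conf (Q : Type) (d : ℕ) := Q × Vec d

/-- A step `p(u) →^{αt} q(v)`: `t` is a transition of `M`, `α ∈ (0,1]`, both
configurations are non-negative and `v = A·u + α·b`. -/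
def Step {Q : Type} {d : ℕ} (M : ACV Q d) (C : Conf Q d) (α : ℚ) (t : Trans Q d)
    (C' : Conf Q d) : Prop :=
  t ∈ M.T ∧ 0 < α ∧ α ≤ 1 ∧ C.1 = t.src ∧ C'.1 = t.tgt ∧
    NonNeg C.2 ∧ NonNeg C'.2 ∧
    C'.2 = (castMat t.mat).mulVec C.2 + α • castVec t.upd

/-- Firing sequences. -/
abbrev FSeq (Q : Type) (d : ℕ) := List (ℚ × Trans Q d)

/-- `Run M C π C'` : `C →^π C'`, i.e. the steps of `π` can be realized in order. -/
inductive Run {Q : Type} {d : ℕ} (M : ACV Q d) : Conf Q d → FSeq Q d → Conf Q d → Prop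
  | nil (C : Conf Q d) (h : NonNeg C.2) : Run M C [] C
  | cons {C C' C'' : Conf Q d} {α : ℚ} {t : Trans Q d} {π : FSeq Q d} :
      Step M C α t C' → Run M C' π C'' → Run M C ((α, t) :: π) C''

/-- `C →* C'`. -/
def Reach {Q : Type} {d : ℕ} (M : ACV Q d) (C C' : Conf Q d) : Prop := ∃ π, Run M C π C'

/-- `p(u)` covers `q(v)`: `p(u) →* q(v')` for some `v' ≥ v`. -/
def Covers {Q : Type} {d : ℕ} (M : ACV Q d) (C C' : Conf Q d) : Prop :=
  ∃ v', C'.2 ≤ v' ∧ Reach M C (C'.1, v')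

/-- Support of a vector. -/
def supp {d : ℕ} (u : Vec d) : Set (Fin d) := {i | u i ≠ 0}

/-- `supp_t^-(x) = {y : A(x,y) > 0}`. -/
def suppMinus {Q : Type} {d : ℕ} (t : Trans Q d) (x : Fin d) : Set (Fin d) :=
  {y | 0 < t.mat x y}

/-- `supp_t^+ = {x : b(x) > 0}`. -/
def suppPlus {Q : Type} {d : ℕ} (t : Trans Q d) : Set (Fin d) := {x | 0 < t.upd x}

/-- `supp_t^p(x)`: counters that can pump `x` via transition `t`. -/
def suppPump {Q : Type} {d : ℕ} (t : Trans Q d) (x : Fin d) : Set (Fin d) :=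
  {y | (y ≠ x ∧ 0 < t.mat x y) ∨ (y = x ∧ 1 < t.mat x y)}

/-- The set of transitions occurring in a firing sequence. -/
def seqSupp {Q : Type} {d : ℕ} (π : FSeq Q d) : Set (Trans Q d) := {t | ∃ α, (α, t) ∈ π}

/-- Non-negative matrix. -/
def NonNegMat {d : ℕ} (A : Mat d) : Prop := ∀ i j, 0 ≤ A i j

/-- Non-negative self-loop matrix: non-negative with no zero diagonal entry. -/
def SelfLoopMat {d : ℕ} (A : Mat d) : Prop := NonNegMat A ∧ ∀ i, A i i ≠ 0

/-- All transition matrices of `M` are non-negative. -/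
def NonNegVASS {Q : Type} {d : ℕ} (M : ACV Q d) : Prop := ∀ t ∈ M.T, NonNegMat t.mat

/-- All transition matrices of `M` are non-negative self-loop matrices. -/
def SelfLoopVASS {Q : Type} {d : ℕ} (M : ACV Q d) : Prop := ∀ t ∈ M.T, SelfLoopMat t.mat

/-- `β·π`: scale all fractions of a firing sequence by `β`. -/
def scaleSeq {Q : Type} {d : ℕ} (β : ℚ) (π : FSeq Q d) : FSeq Q d :=
  π.map (fun p => (β * p.1, p.2))

/-- Counter `x` is pumped by transition `t` in the run obtained by firing `π` from `C`:
some step of the run uses `t` from a source configuration `C₁` with a counter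
`y ∈ supp_t^p(x)` of positive value. -/
def PumpedBy {Q : Type} {d : ℕ} (M : ACV Q d) (C : Conf Q d) (π : FSeq Q d)
    (t : Trans Q d) (x : Fin d) : Prop :=
  ∃ (π₁ : FSeq Q d) (α : ℚ) (π₂ : FSeq Q d) (C₁ C₂ : Conf Q d),
    π = π₁ ++ (α, t) :: π₂ ∧ Run M C π₁ C₁ ∧ Step M C₁ α t C₂ ∧
    ∃ y ∈ suppPump t x, 0 < C₁.2 y

/-- Counter `x` is pumped in the run obtained by firing `π` from `C`. -/
def Pumps {Q : Type} {d : ℕ} (M : ACV Q d) (C : Conf Q d) (π : FSeq Q d) (x : Fin d) : Prop :=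
  ∃ t, PumpedBy M C π t x

/-- Edges of the support abstraction `SU_M`. -/
def SuppEdge {Q : Type} {d : ℕ} (M : ACV Q d) (v : Q × Set (Fin d)) (t : Trans Q d)
    (v' : Q × Set (Fin d)) : Prop :=
  t ∈ M.T ∧ v.1 = t.src ∧ v'.1 = t.tgt ∧
    ∀ x : Fin d,
      (t.upd x < 0 → (suppMinus t x ∩ v.2).Nonempty) ∧
      (0 < t.upd x → x ∈ v'.2) ∧
      (x ∈ v'.2 → 0 < t.upd x ∨ (suppMinus t x ∩ v.2).Nonempty)

/-- Directed-path reachability in the support abstraction `SU_M`. -/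
def SuppReach {Q : Type} {d : ℕ} (M : ACV Q d) :
    Q × Set (Fin d) → Q × Set (Fin d) → Prop :=
  Relation.ReflTransGen (fun a b => ∃ t, SuppEdge M a t b)

/-- A step of the continuous VASS `M_X` (only the counters in `X` are tracked). -/
def StepX {Q : Type} {d : ℕ} (M : ACV Q d) (X : Set (Fin d)) (p : Q) (u : Vec d) (α : ℚ)
    (t : Trans Q d) (q : Q) (v : Vec d) : Prop :=
  t ∈ M.T ∧ 0 < α ∧ α ≤ 1 ∧ p = t.src ∧ q = t.tgt ∧
    (∀ i ∈ X, 0 ≤ u i) ∧ (∀ i ∈ X, 0 ≤ v i) ∧ (∀ i ∈ X, v i = u i + α * castVec t.upd i)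

/-- A run of the continuous VASS `M_X`; vectors matter only on the counters of `X`. -/
inductive RunX {Q : Type} {d : ℕ} (M : ACV Q d) (X : Set (Fin d)) :
    Q → Vec d → FSeq Q d → Q → Vec d → Prop
  | nil (p : Q) (u v : Vec d) (h : ∀ i ∈ X, 0 ≤ u i ∧ u i = v i) : RunX M X p u [] p v
  | cons {p r q : Q} {u w v : Vec d} {α : ℚ} {t : Trans Q d} {π : FSeq Q d} :
      StepX M X p u α t r w → RunX M X r w π q v → RunX M X p u ((α, t) :: π) q v

/-- One edge of the graph `G_M` using only transitions from `S`. -/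
def GStep {Q : Type} {d : ℕ} (S : Set (Trans Q d)) (a b : Q) : Prop :=
  ∃ t ∈ S, t.src = a ∧ t.tgt = b

/-- A (possibly empty) path in the graph `G_M` using only transitions from `S`. -/
def GPath {Q : Type} {d : ℕ} (S : Set (Trans Q d)) : Q → Q → Prop :=
  Relation.ReflTransGen (GStep S)

/-- `Rep-Half(π)`: the i-th fraction of `π` is divided by `2^i`. -/
def repHalf {Q : Type} {d : ℕ} : FSeq Q d → FSeq Q d
  | [] => []
  | (α, t) :: rest => (α / 2, t) :: scaleSeq (1 / 2) (repHalf rest)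

/-- Descending partial product `A_{ℓ-1} ⋯ A_j` (0-indexed); for `j = ℓ` this is
the identity matrix. -/
def descProd {d ℓ : ℕ} (A : Fin ℓ → Matrix (Fin d) (Fin d) ℚ) (j : ℕ) :
    Matrix (Fin d) (Fin d) ℚ :=
  (((List.finRange ℓ).drop j).reverse.map A).prod

/-- The permutation matrix `P_σ` with `P_σ(i,j) = 1` iff `σ(i) = j`. -/
def permMat {n : ℕ} (σ : Equiv.Perm (Fin n)) : Matrix (Fin n) (Fin n) ℤ :=
  Matrix.of fun i j => if σ i = j then 1 else 0

/-- A matrix is a permutation matrix. -/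
def IsPermMat {d : ℕ} (A : Mat d) : Prop := ∃ σ : Equiv.Perm (Fin d), A = permMat σ

/-- The n×n block-diagonal matrix with blocks `I_o`, `A`, `I_{n-o-k}`:
`A` occupies rows/columns `o,…,o+k-1` and the rest is identity. -/
def applyBlock {k : ℕ} (A : Matrix (Fin k) (Fin k) ℤ) (o n : ℕ) :
    Matrix (Fin n) (Fin n) ℤ :=
  Matrix.of fun r c =>
    if h : o ≤ r.val ∧ r.val < o + k ∧ o ≤ c.val ∧ c.val < o + k then
      A ⟨r.val - o, by omega⟩ ⟨c.val - o, by omega⟩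
    else if r.val = c.val then 1 else 0

/-- Transitions of a continuous VASS (with identity matrices left implicit). -/
abbrev CTrans (Q : Type) (d : ℕ) := Q × (Fin d → ℤ) × Q

/-- Zero-tests. -/
abbrev ZTest (Q : Type) (d : ℕ) := Q × Fin d × Q

/-- A d-dimensional continuous VASS with zero-tests. -/
structure CVZ (Q : Type) (d : ℕ) where
  T : Finset (CTrans Q d)
  T0 : Finset (ZTest Q d)

/-- A transition step of a continuous VASS with zero-tests. -/
def CStep {Q : Type} {d : ℕ} (M : CVZ Q d) (C : Conf Q d) (α : ℚ) (t : CTrans Q d)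
    (C' : Conf Q d) : Prop :=
  t ∈ M.T ∧ 0 < α ∧ α ≤ 1 ∧ C.1 = t.1 ∧ C'.1 = t.2.2 ∧
    NonNeg C.2 ∧ NonNeg C'.2 ∧ C'.2 = C.2 + α • castVec t.2.1

/-- A zero-test step of a continuous VASS with zero-tests. -/
def ZStep {Q : Type} {d : ℕ} (M : CVZ Q d) (C : Conf Q d) (t : ZTest Q d)
    (C' : Conf Q d) : Prop :=
  t ∈ M.T0 ∧ C.1 = t.1 ∧ C'.1 = t.2.2 ∧ NonNeg C.2 ∧ C.2 t.2.1 = 0 ∧ C'.2 = C.2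

/-- A d-dimensional continuous VASS. -/
structure CV (Q : Type) (d : ℕ) where
  T : Finset (CTrans Q d)

/-- A step of a continuous VASS. -/
def CVStep {Q : Type} {d : ℕ} (M : CV Q d) (C : Conf Q d) (α : ℚ) (t : CTrans Q d)
    (C' : Conf Q d) : Prop :=
  t ∈ M.T ∧ 0 < α ∧ α ≤ 1 ∧ C.1 = t.1 ∧ C'.1 = t.2.2 ∧
    NonNeg C.2 ∧ NonNeg C'.2 ∧ C'.2 = C.2 + α • castVec t.2.1

/-- Reachability (`→*`) in a continuous VASS. -/
def CVReach {Q : Type} {d : ℕ} (M : CV Q d) : Conf Q d → Conf Q d → Prop :=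
  Relation.ReflTransGen (fun C C' => ∃ α t, CVStep M C α t C')

section

variable {Q : Type} {d : ℕ} {M : ACV Q d} {C C' : Conf Q d} {α β : ℚ}

theorem NonNeg.smul {u : Vec d} (hu : NonNeg u) (hα : 0 ≤ α) : NonNeg (α • u) :=
  fun i => mul_nonneg hα (hu i)

theorem Step.smul {t : Trans Q d} (h : Step M C β t C') (hα : 0 < α) (hαβ : α * β ≤ 1) :
    Step M (C.1, α • C.2) (α * β) t (C'.1, α • C'.2) := by
  obtain ⟨ht, hβ, -, hsrc, htgt, hC, hC', hupd⟩ := h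
  have hupd_smul : α • C'.2 =
      (castMat t.mat).mulVec (α • C.2) + (α * β) • castVec t.upd := by
    rw [hupd, smul_add, Matrix.mulVec_smul, smul_smul]
  exact ⟨ht, mul_pos hα hβ, hαβ, hsrc, htgt, hC.smul hα.le, hC'.smul hα.le, hupd_smul⟩

theorem Run.fraction_le_one {π : FSeq Q d} (h : Run M C π C') : ∀ s ∈ π, s.1 ≤ 1 := by
  induction h with
  | nil => exact List.forall_mem_nil _
  | cons hstep _ ih =>
    obtain ⟨-, -, hle, -⟩ := hstep
    exact List.forall_mem_cons.2 ⟨hle, ih⟩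

theorem run_scale_general {π : FSeq Q d} (h : Run M C π C') (hα : 0 < α)
    (hπ : ∀ s ∈ π, α * s.1 ≤ 1) :
    Run M (C.1, α • C.2) (scaleSeq α π) (C'.1, α • C'.2) := by
  induction h with
  | nil C hC => exact .nil _ (hC.smul hα.le)
  | cons hstep _ ih =>
    obtain ⟨hhead, htail⟩ := List.forall_mem_cons.1 hπ
    exact .cons (hstep.smul hα hhead) (ih htail)

end

/-- runs can be scaled by any fraction `α ∈ (0,1]`. -/
theorem run_scale
    {Q : Type} [Fintype Q] {d : ℕ} (M : ACV Q d) (hM : SelfLoopVASS M)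
    (p q : Q) (u v : Vec d) (π : FSeq Q d) (hrun : Run M (p, u) π (q, v))
    (α : ℚ) (hα0 : 0 < α) (hα1 : α ≤ 1) :
    Run M (p, α • u) (scaleSeq α π) (q, α • v) := by
  exact run_scale_general hrun hα0 fun s hs =>
    (mul_le_of_le_one_right hα0.le (hrun.fraction_le_one s hs)).trans hα1

end ACVASS
end

section
/- Let M be a d-dimensional affine continuous VASS all of whose transition matrices are non-negative self-loop matrices. If p(u) →^π q(v) is a run, then for every w ∈ ℚ₊^d there exists v' ∈ ℚ₊^d with v' ≥ v + w componentwise such that p(u + w) →^π q(v'). -/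
namespace ACVASS

/-!
Raising the counters by `w` before a step with matrix `A` raises them by `A w` after it, so along a
run the increment is multiplied by the successive matrices. A non-negative matrix with positive
integer diagonal satisfies `w ≤ A w` for `w ≥ 0`; the increment therefore never shrinks, and in
particular it never makes a counter negative.
-/

section Matrices

open scoped Matrix

variable {d : ℕ} {A : Mat d} {w : Vec d}

theorem NonNegMat.castMat_nonneg (hA : NonNegMat A) (i j : Fin d) : 0 ≤ castMat A i j :=
  Int.cast_nonneg (hA i j)

theorem NonNegMat.nonNeg_mulVec (hA : NonNegMat A) (hw : NonNeg w) : NonNeg (castMat A *ᵥ w) :=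
  fun i => Finset.sum_nonneg fun j _ => mul_nonneg (hA.castMat_nonneg i j) (hw j)

theorem SelfLoopMat.one_le_castMat_diag (hA : SelfLoopMat A) (i : Fin d) : 1 ≤ castMat A i i := by
  have h_pos : 0 < A i i := (hA.1 i i).lt_of_ne' (hA.2 i)
  exact Int.cast_one_le_of_pos h_pos

theorem SelfLoopMat.le_mulVec (hA : SelfLoopMat A) (hw : NonNeg w) : w ≤ castMat A *ᵥ w := by
  intro i
  calc
    w i ≤ castMat A i i * w i := le_mul_of_one_le_left (hw i) (hA.one_le_castMat_diag i)
    _ ≤ ∑ j, castMat A i j * w j :=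
      Finset.single_le_sum (f := fun j => castMat A i j * w j)
        (fun j _ => mul_nonneg (hA.1.castMat_nonneg i j) (hw j)) (Finset.mem_univ i)

end Matrices

section Runs

open scoped Matrix

variable {Q : Type} {d : ℕ} {M : ACV Q d} {C C' : Conf Q d} {π : FSeq Q d} {w : Vec d}

/-- The matrix of a firing sequence `α₁t₁,…,α_k t_k`, namely `A_k ⋯ A_1` over `ℚ`: the linear part
of the affine map that the sequence applies to the counters. -/
def seqMat : FSeq Q d → Matrix (Fin d) (Fin d) ℚ
  | [] => 1
  | (_, t) :: π => seqMat π * castMat t.mat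

theorem seqSupp_cons (α : ℚ) (t : Trans Q d) (π : FSeq Q d) :
    seqSupp ((α, t) :: π) = insert t (seqSupp π) := by
  ext s
  simp [seqSupp, exists_or]

theorem le_seqMat_mulVec (hπ : ∀ t ∈ seqSupp π, SelfLoopMat t.mat) (hw : NonNeg w) :
    w ≤ seqMat π *ᵥ w := by
  induction π generalizing w with
  | nil => simp [seqMat]
  | cons s π ih =>
    obtain ⟨α, t⟩ := s
    rw [seqSupp_cons, Set.forall_mem_insert] at hπ
    obtain ⟨ht, hπ⟩ := hπ
    calc
      w ≤ castMat t.mat *ᵥ w := ht.le_mulVec hw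
      _ ≤ seqMat π *ᵥ (castMat t.mat *ᵥ w) := ih hπ (ht.1.nonNeg_mulVec hw)
      _ = seqMat ((α, t) :: π) *ᵥ w := Matrix.mulVec_mulVec ..

theorem Run.seqSupp_subset (hrun : Run M C π C') : seqSupp π ⊆ M.T := by
  induction hrun with
  | nil => simp [seqSupp]
  | cons hstep _ ih => exact seqSupp_cons .. ▸ Set.insert_subset hstep.1 ih

theorem Run.nonNeg_target (hrun : Run M C π C') : NonNeg C'.2 := by
  induction hrun with
  | nil _ h => exact h
  | cons _ _ ih => exact ih

theorem Step.add {α : ℚ} {t : Trans Q d} (hstep : Step M C α t C') (ht : NonNegMat t.mat)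
    (hw : NonNeg w) : Step M (C.1, C.2 + w) α t (C'.1, C'.2 + castMat t.mat *ᵥ w) := by
  obtain ⟨ht_mem, hα_pos, hα_le, hsrc, htgt, hC, hC', heq⟩ := hstep
  refine ⟨ht_mem, hα_pos, hα_le, hsrc, htgt, fun i => add_nonneg (hC i) (hw i),
    fun i => add_nonneg (hC' i) (ht.nonNeg_mulVec hw i), ?_⟩
  simp only [heq, Matrix.mulVec_add]
  abel

theorem Run.add (hrun : Run M C π C') (hπ : ∀ t ∈ seqSupp π, NonNegMat t.mat) (hw : NonNeg w) :
    Run M (C.1, C.2 + w) π (C'.1, C'.2 + seqMat π *ᵥ w) := by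
  induction hrun generalizing w with
  | nil C hC =>
    rw [seqMat, Matrix.one_mulVec]
    exact .nil _ fun i => add_nonneg (hC i) (hw i)
  | cons hstep _ ih =>
    rw [seqSupp_cons, Set.forall_mem_insert] at hπ
    obtain ⟨ht, hπ⟩ := hπ
    rw [seqMat, ← Matrix.mulVec_mulVec]
    exact .cons (hstep.add ht hw) (ih hπ (ht.nonNeg_mulVec hw))

theorem run_add_general {p q : Q} {u v : Vec d} (hπ : ∀ t ∈ seqSupp π, SelfLoopMat t.mat)
    (hrun : Run M (p, u) π (q, v)) (hw : NonNeg w) :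
    ∃ v' : Vec d, NonNeg v' ∧ v + w ≤ v' ∧ Run M (p, u + w) π (q, v') := by
  have hrun' : Run M (p, u + w) π (q, v + seqMat π *ᵥ w) := hrun.add (fun t ht => (hπ t ht).1) hw
  have hle : v + w ≤ v + seqMat π *ᵥ w := by
    gcongr
    exact le_seqMat_mulVec hπ hw
  exact ⟨_, hrun'.nonNeg_target, hle, hrun'⟩

end Runs

/-- runs are monotone under adding a non-negative vector. -/
theorem run_add
    {Q : Type} [Fintype Q] {d : ℕ} (M : ACV Q d) (hM : SelfLoopVASS M)
    (p q : Q) (u v : Vec d) (π : FSeq Q d) (hrun : Run M (p, u) π (q, v))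
    (w : Vec d) (hw : NonNeg w) :
    ∃ v' : Vec d, NonNeg v' ∧ v + w ≤ v' ∧ Run M (p, u + w) π (q, v') :=
  run_add_general (fun t ht => hM t (hrun.seqSupp_subset ht)) hrun hw

end ACVASS
end

section
/- (Soundness of the support abstraction) Let M be a d-dimensional affine continuous VASS all of whose transition matrices have only non-negative entries. If p(u) →^{αt} q(v) is a step of M with t = (p,A,b,q), then for every counter x: (i) if b(x) < 0 then supp_t^-(x) ∩ supp(u) ≠ ∅; (ii) if b(x) > 0 then v(x) > 0; (iii) if v(x) > 0 then b(x) > 0 or supp_t^-(x) ∩ supp(u) ≠ ∅. Consequently (p, supp(u)) →^t (q, supp(v)) is an edge of the support abstraction SU_M. -/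
namespace ACVASS

/-!
Row `x` of `v = A·u + α·b` reads `v(x) = (A·u)(x) + α·b(x)`. When `A` and `u` are non-negative
nothing cancels in `(A·u)(x) = ∑ y, A(x,y)·u(y)`, so `(A·u)(x) ≥ 0`, with strict inequality exactly
when `supp_t^-(x)` meets `supp(u)`. As `α > 0` and `v(x) ≥ 0`, comparing signs on both sides gives
the three conditions.
-/

theorem dotProduct_pos_iff_of_nonneg {ι R : Type*} [Fintype ι] [Semiring R] [PartialOrder R]
    [IsStrictOrderedRing R] {a b : ι → R} (ha : ∀ i, 0 ≤ a i) (hb : ∀ i, 0 ≤ b i) :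
    0 < a ⬝ᵥ b ↔ ∃ i, 0 < a i ∧ 0 < b i := by
  simp only [dotProduct, Finset.sum_pos_iff_of_nonneg fun i _ => mul_nonneg (ha i) (hb i),
    Finset.mem_univ, true_and]
  refine exists_congr fun i => ⟨fun h => ?_, fun ⟨hai, hbi⟩ => mul_pos hai hbi⟩
  exact ⟨(ha i).lt_of_ne' (left_ne_zero_of_mul h.ne'),
    (hb i).lt_of_ne' (right_ne_zero_of_mul h.ne')⟩

theorem mem_supp_iff_pos {d : ℕ} {u : Vec d} {i : Fin d} (hu : 0 ≤ u i) :
    i ∈ supp u ↔ 0 < u i :=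
  hu.lt_iff_ne'.symm

theorem mulVec_castMat_nonneg {d : ℕ} {A : Mat d} {u : Vec d} {x : Fin d}
    (hA : ∀ y, 0 ≤ A x y) (hu : NonNeg u) : 0 ≤ (castMat A).mulVec u x :=
  dotProduct_nonneg_of_nonneg (fun y => Int.cast_nonneg (hA y)) hu

theorem mulVec_castMat_pos_iff {Q : Type} {d : ℕ} {t : Trans Q d} {u : Vec d} {x : Fin d}
    (hA : ∀ y, 0 ≤ t.mat x y) (hu : NonNeg u) :
    0 < (castMat t.mat).mulVec u x ↔ (suppMinus t x ∩ supp u).Nonempty :=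
  (dotProduct_pos_iff_of_nonneg (fun y => Int.cast_nonneg (hA y)) hu).trans <|
    exists_congr fun y => and_congr Int.cast_pos (mem_supp_iff_pos (hu y)).symm

namespace Step

variable {Q : Type} {d : ℕ} {M : ACV Q d} {C C' : Conf Q d} {α : ℚ} {t : Trans Q d} {x : Fin d}

theorem apply_eq (h : Step M C α t C') (x : Fin d) :
    C'.2 x = (castMat t.mat).mulVec C.2 x + α * t.upd x := by
  obtain ⟨-, -, -, -, -, -, -, hC'⟩ := h
  exact congrFun hC' x

theorem suppMinus_inter_supp_nonempty_of_upd_neg (h : Step M C α t C')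
    (hA : ∀ y, 0 ≤ t.mat x y) (hb : t.upd x < 0) : (suppMinus t x ∩ supp C.2).Nonempty := by
  have hx := h.apply_eq x
  obtain ⟨-, hα, -, -, -, hC, hC', -⟩ := h
  have hαb : α * t.upd x < 0 := mul_neg_of_pos_of_neg hα (Int.cast_lt_zero.mpr hb)
  rw [← mulVec_castMat_pos_iff hA hC]
  linarith [hC' x]

theorem pos_of_upd_pos (h : Step M C α t C') (hA : ∀ y, 0 ≤ t.mat x y) (hb : 0 < t.upd x) :
    0 < C'.2 x := by
  rw [h.apply_eq x]
  obtain ⟨-, hα, -, -, -, hC, -, -⟩ := h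
  exact add_pos_of_nonneg_of_pos (mulVec_castMat_nonneg hA hC) (mul_pos hα (Int.cast_pos.mpr hb))

theorem upd_pos_or_suppMinus_inter_supp_nonempty_of_pos (h : Step M C α t C')
    (hA : ∀ y, 0 ≤ t.mat x y) (hx : 0 < C'.2 x) :
    0 < t.upd x ∨ (suppMinus t x ∩ supp C.2).Nonempty := by
  rw [h.apply_eq x] at hx
  obtain ⟨-, hα, -, -, -, hC, -, -⟩ := h
  rw [← mulVec_castMat_pos_iff hA hC]
  refine or_iff_not_imp_left.mpr fun hb => ?_
  have hαb : α * t.upd x ≤ 0 :=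
    mul_nonpos_of_nonneg_of_nonpos hα.le (Int.cast_nonpos.mpr (not_lt.mp hb))
  linarith

theorem suppEdge (h : Step M C α t C') (hA : NonNegMat t.mat) :
    SuppEdge M (C.1, supp C.2) t (C'.1, supp C'.2) := by
  have ⟨ht, _, _, hsrc, htgt, _, hC', _⟩ := h
  refine ⟨ht, hsrc, htgt, fun x => ?_⟩
  rw [mem_supp_iff_pos (hC' x)]
  exact ⟨h.suppMinus_inter_supp_nonempty_of_upd_neg (hA x), h.pos_of_upd_pos (hA x),
    h.upd_pos_or_suppMinus_inter_supp_nonempty_of_pos (hA x)⟩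

end Step

theorem support_abstraction_sound_general
    {Q : Type} {d : ℕ} (M : ACV Q d) (p q : Q) (u v : Vec d) (α : ℚ) (t : Trans Q d)
    (hA : NonNegMat t.mat) (hstep : Step M (p, u) α t (q, v)) :
    (∀ x : Fin d,
      (t.upd x < 0 → (suppMinus t x ∩ supp u).Nonempty) ∧
      (0 < t.upd x → 0 < v x) ∧
      (0 < v x → 0 < t.upd x ∨ (suppMinus t x ∩ supp u).Nonempty)) ∧
    SuppEdge M (p, supp u) t (q, supp v) :=
  ⟨fun x => ⟨hstep.suppMinus_inter_supp_nonempty_of_upd_neg (hA x), hstep.pos_of_upd_pos (hA x),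
    hstep.upd_pos_or_suppMinus_inter_supp_nonempty_of_pos (hA x)⟩, hstep.suppEdge hA⟩

/-- Soundness of the support abstraction. -/
theorem support_abstraction_sound
    {Q : Type} [Fintype Q] {d : ℕ} (M : ACV Q d) (hM : NonNegVASS M)
    (p q : Q) (u v : Vec d) (α : ℚ) (t : Trans Q d)
    (hstep : Step M (p, u) α t (q, v)) :
    (∀ x : Fin d,
      (t.upd x < 0 → (suppMinus t x ∩ supp u).Nonempty) ∧
      (0 < t.upd x → 0 < v x) ∧
      (0 < v x → 0 < t.upd x ∨ (suppMinus t x ∩ supp u).Nonempty)) ∧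
    SuppEdge M (p, supp u) t (q, supp v) :=
  support_abstraction_sound_general M p q u v α t (hM t hstep.1) hstep

end ACVASS
end

section
/- (Completeness of the support abstraction) Let M be a d-dimensional affine continuous VASS all of whose transition matrices have only non-negative entries. Suppose (p,S) →^t (q,S') is an edge of the support abstraction SU_M with t = (p,A,b,q), and suppose p(u) is a configuration of M with S ⊆ supp(u). Then there exist a rational α ∈ (0,1] and a vector v ∈ ℚ₊^d with S' ⊆ supp(v) such that p(u) →^{αt} q(v) is a step of M. -/
namespace ACVASS

/-! The conditions on an edge out of `(p, supp u)` force `A·u` to be positive at every counter that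
`b` decreases, and at every counter of `S'` that `b` does not increase. Adding `α·b` preserves
these finitely many strict inequalities for all small `α > 0`, and at the other counters `α·b`
is non-negative. -/

open Filter Matrix Topology

theorem dotProduct_pos_of_exists_pos {n R : Type*} [Fintype n] [Semiring R] [PartialOrder R]
    [IsStrictOrderedRing R] {v w : n → R} (hv : 0 ≤ v) (hw : 0 ≤ w)
    (h : ∃ i, 0 < v i ∧ 0 < w i) : 0 < v ⬝ᵥ w :=
  let ⟨i, hvi, hwi⟩ := h
  Finset.sum_pos' (fun j _ => mul_nonneg (hv j) (hw j)) ⟨i, Finset.mem_univ i, mul_pos hvi hwi⟩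

section SmallPerturbation

variable {R : Type*} [Semiring R] [LinearOrder R] [IsStrictOrderedRing R] [TopologicalSpace R]
  [OrderTopology R] [IsTopologicalSemiring R] {a b : R}

theorem eventually_add_mul_pos (ha : 0 ≤ a) (h : 0 < a ∨ 0 < b) :
    ∀ᶠ α in 𝓝[>] 0, 0 < a + α * b := by
  rcases h with ha' | hb
  · have hlim : Tendsto (fun α => a + α * b) (𝓝[>] 0) (𝓝 a) :=
      tendsto_nhdsWithin_of_tendsto_nhds <| Continuous.tendsto' (by fun_prop) _ _ (by simp)
    exact hlim.eventually_const_lt ha'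
  · filter_upwards [self_mem_nhdsWithin] with α hα
    exact add_pos_of_nonneg_of_pos ha (mul_pos hα hb)

theorem eventually_add_mul_nonneg (ha : 0 ≤ a) (h : b < 0 → 0 < a) :
    ∀ᶠ α in 𝓝[>] 0, 0 ≤ a + α * b := by
  rcases lt_or_ge b 0 with hb | hb
  · exact (eventually_add_mul_pos ha (.inl (h hb))).mono fun _ => le_of_lt
  · filter_upwards [self_mem_nhdsWithin] with α hα
    exact add_nonneg ha (mul_nonneg (le_of_lt hα) hb)

end SmallPerturbation

/-- The vector `A·u + α·b` reached by firing the fraction `α` of `t = (p, A, b, q)` from `u`. It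
may have negative entries; `Step` requires non-negativity separately. -/
def Trans.fire {Q : Type} {d : ℕ} (t : Trans Q d) (α : ℚ) (u : Vec d) : Vec d :=
  castMat t.mat *ᵥ u + α • castVec t.upd

section Firing

variable {Q : Type} {d : ℕ} {M : ACV Q d} {t : Trans Q d} {u : Vec d}

theorem NonNegMat.castMat_apply_nonneg {A : Mat d} (hA : NonNegMat A) (x y : Fin d) :
    0 ≤ castMat A x y :=
  Int.cast_nonneg (hA x y)

theorem NonNegMat.mulVec_nonneg {A : Mat d} (hA : NonNegMat A) (hu : NonNeg u) :
    NonNeg (castMat A *ᵥ u) :=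
  fun x => dotProduct_nonneg_of_nonneg (hA.castMat_apply_nonneg x) hu

theorem NonNegMat.mulVec_pos (hA : NonNegMat t.mat) (hu : NonNeg u) {x : Fin d}
    (hx : (suppMinus t x ∩ supp u).Nonempty) : 0 < (castMat t.mat *ᵥ u) x := by
  obtain ⟨y, hAxy, hy⟩ := hx
  exact dotProduct_pos_of_exists_pos (hA.castMat_apply_nonneg x) hu
    ⟨y, Int.cast_pos.2 hAxy, (hu y).lt_of_ne' hy⟩

namespace SuppEdge

theorem mono_left {p : Q} {S₁ S₂ : Set (Fin d)} {v' : Q × Set (Fin d)}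
    (h : SuppEdge M (p, S₁) t v') (hS : S₁ ⊆ S₂) : SuppEdge M (p, S₂) t v' := by
  obtain ⟨ht, hsrc, htgt, hcond⟩ := h
  have hmono (x : Fin d) (hx : (suppMinus t x ∩ S₁).Nonempty) :
      (suppMinus t x ∩ S₂).Nonempty :=
    hx.mono (Set.inter_subset_inter_right _ hS)
  refine ⟨ht, hsrc, htgt, fun x => ?_⟩
  obtain ⟨hneg, hpos, hmem⟩ := hcond x
  exact ⟨fun hb => hmono x (hneg hb), hpos, fun hx => (hmem hx).imp_right (hmono x)⟩

variable {p : Q} {v' : Q × Set (Fin d)}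

theorem eventually_nonNeg_fire (h : SuppEdge M (p, supp u) t v') (hA : NonNegMat t.mat)
    (hu : NonNeg u) : ∀ᶠ α in 𝓝[>] (0 : ℚ), NonNeg (t.fire α u) := by
  obtain ⟨-, -, -, hcond⟩ := h
  refine eventually_all.2 fun x => eventually_add_mul_nonneg (hA.mulVec_nonneg hu x) fun hb => ?_
  exact hA.mulVec_pos hu ((hcond x).1 (Int.cast_lt_zero.1 hb))

theorem eventually_subset_supp_fire (h : SuppEdge M (p, supp u) t v') (hA : NonNegMat t.mat)
    (hu : NonNeg u) : ∀ᶠ α in 𝓝[>] (0 : ℚ), v'.2 ⊆ supp (t.fire α u) := by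
  obtain ⟨-, -, -, hcond⟩ := h
  refine eventually_all.2 fun x => eventually_imp_distrib_left.2 fun hx => ?_
  have hpos : 0 < (castMat t.mat *ᵥ u) x ∨ (0 : ℚ) < t.upd x :=
    ((hcond x).2.2 hx).symm.imp (hA.mulVec_pos hu) Int.cast_pos.2
  exact (eventually_add_mul_pos (hA.mulVec_nonneg hu x) hpos).mono fun _ => ne_of_gt

end SuppEdge

theorem support_abstraction_complete_general {p q : Q} {S S' : Set (Fin d)}
    (hA : NonNegMat t.mat) (hedge : SuppEdge M (p, S) t (q, S')) (hu : NonNeg u)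
    (hsub : S ⊆ supp u) :
    ∀ᶠ α in 𝓝[>] (0 : ℚ), S' ⊆ supp (t.fire α u) ∧ Step M (p, u) α t (q, t.fire α u) := by
  have hedge' : SuppEdge M (p, supp u) t (q, S') := hedge.mono_left hsub
  obtain ⟨ht, hsrc, htgt, -⟩ := hedge
  filter_upwards [hedge'.eventually_nonNeg_fire hA hu, hedge'.eventually_subset_supp_fire hA hu,
    Ioc_mem_nhdsGT one_pos] with α hnonneg hsupp hα
  exact ⟨hsupp, ht, hα.1, hα.2, hsrc, htgt, hu, hnonneg, rfl⟩

end Firing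

/-- Completeness of the support abstraction. -/
theorem support_abstraction_complete
    {Q : Type} [Fintype Q] {d : ℕ} (M : ACV Q d) (hM : NonNegVASS M)
    (p q : Q) (S S' : Set (Fin d)) (t : Trans Q d)
    (hedge : SuppEdge M (p, S) t (q, S'))
    (u : Vec d) (hu : NonNeg u) (hsub : S ⊆ supp u) :
    ∃ (α : ℚ) (v : Vec d), 0 < α ∧ α ≤ 1 ∧ NonNeg v ∧ S' ⊆ supp v ∧
      Step M (p, u) α t (q, v) := by
  obtain ⟨α, hsupp, hstep⟩ :=
    (support_abstraction_complete_general (hM t hedge.1) hedge hu hsub).exists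
  have ⟨_, hα₀, hα₁, _, _, _, hv, _⟩ := hstep
  exact ⟨α, t.fire α u, hα₀, hα₁, hv, hsupp, hstep⟩

end ACVASS
end

section
/- Let M = (Q,T) be a d-dimensional affine continuous VASS in which the matrix of every transition is a d×d permutation matrix and every transition t = (p,A,b,q) satisfies b = 0 or A = I. Define the d-dimensional continuous VASS M' with states {q_π : q ∈ Q, π a permutation of {1,…,d}} and the following transitions: for each permutation π and each t = (p,A,0,q) ∈ T with A a permutation matrix, a transition from p_π to q_{π'} with additive update 0, where π' is the unique permutation with P_{π'} = P_π · A^{-1}; and for each t = (p,I,b,q) ∈ T, a transition from p_π to q_π with additive update P_π·b. Then for all u, v ∈ ℚ₊^d and states p, q ∈ Q: p(u) →* q(v) in M if and only if there exists a permutation σ of {1,…,d} such that p_{id}(u) →* q_σ(P_σ·v) in M', where id is the identity permutation. -/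
namespace ACVASS

/-!
Permuting the counters can be postponed: instead of applying `P_τ` to the counters, keep them in
place and record in the state under which names they are stored. A configuration `q(v)` is thus
stored under a renaming `σ` as `q_σ(P_σ v)`. Since `P_π P_τ u` is the stored vector `P_{τπ} u`, a
transition `v = P_τ u + α b` becomes, read from `τπ` to `π`, the purely additive
`P_π v = P_{τπ} u + α P_π b`. Storing configurations is hence a bisimulation, whether or not
`b = 0` or `τ = 1`; under that restriction `P_π b = P_{τπ} b`, which is the update of the paper.
-/

section PermutationMatrices

theorem permMat_eq_permMatrix {d : ℕ} (σ : Equiv.Perm (Fin d)) :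
    permMat σ = σ.permMatrix ℤ := by
  ext i j
  simp [permMat, Equiv.toPEquiv_apply, eq_comm]

theorem castMat_permMat {d : ℕ} (σ : Equiv.Perm (Fin d)) :
    castMat (permMat σ) = σ.permMatrix ℚ := by
  rw [permMat_eq_permMatrix]
  exact PEquiv.map_toMatrix (Int.castRingHom ℚ) σ.toPEquiv

theorem permMat_mulVec {d : ℕ} (σ : Equiv.Perm (Fin d)) (b : Fin d → ℤ) :
    (permMat σ).mulVec b = b ∘ σ := by
  rw [permMat_eq_permMatrix, Matrix.permMatrix_mulVec]

theorem castMat_permMat_mulVec {d : ℕ} (σ : Equiv.Perm (Fin d)) (v : Vec d) :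
    (castMat (permMat σ)).mulVec v = v ∘ σ := by
  rw [castMat_permMat, Matrix.permMatrix_mulVec]

theorem permMat_injective {d : ℕ} :
    Function.Injective (permMat : Equiv.Perm (Fin d) → Mat d) := by
  intro σ τ h
  rw [permMat_eq_permMatrix, permMat_eq_permMatrix] at h
  exact Equiv.ext fun i => Option.some.inj (DFunLike.congr_fun (PEquiv.toMatrix_injective h) i)

theorem permMat_one {d : ℕ} : permMat (1 : Equiv.Perm (Fin d)) = 1 := by
  rw [permMat_eq_permMatrix, Matrix.permMatrix_one]

theorem permMat_mul {d : ℕ} (σ τ : Equiv.Perm (Fin d)) :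
    permMat σ * permMat τ = permMat (τ * σ) := by
  simp only [permMat_eq_permMatrix, Matrix.permMatrix_mul]

theorem permMat_inv {d : ℕ} (τ : Equiv.Perm (Fin d)) : (permMat τ)⁻¹ = permMat τ⁻¹ :=
  Matrix.inv_eq_left_inv <| by rw [permMat_mul, mul_inv_cancel, permMat_one]

theorem permMat_eq_mul_inv_iff {d : ℕ} {π ρ τ : Equiv.Perm (Fin d)} :
    permMat π = permMat ρ * (permMat τ)⁻¹ ↔ ρ = τ * π := by
  rw [permMat_inv, permMat_mul, permMat_injective.eq_iff, eq_inv_mul_iff_mul_eq, eq_comm]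

end PermutationMatrices

section Renaming

variable {Q : Type} {d : ℕ}

/-- The configuration `q(v)` stored under the renaming `σ`, that is, `q_σ(P_σ v)`. -/
def rename (σ : Equiv.Perm (Fin d)) (C : Conf Q d) : Conf (Q × Equiv.Perm (Fin d)) d :=
  ((C.1, σ), C.2 ∘ σ)

/-- The configuration of the affine continuous VASS that a configuration of its reduction stores:
`unrename` undoes `rename σ` for every `σ`. -/
def unrename (D : Conf (Q × Equiv.Perm (Fin d)) d) : Conf Q d :=
  (D.1.1, D.2 ∘ D.1.2.symm)

theorem unrename_rename (σ : Equiv.Perm (Fin d)) (C : Conf Q d) :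
    unrename (rename σ C) = C := by
  simp [rename, unrename, Function.comp_assoc]

theorem rename_unrename {D : Conf (Q × Equiv.Perm (Fin d)) d} {σ : Equiv.Perm (Fin d)}
    (hσ : D.1.2 = σ) : rename σ (unrename D) = D := by
  subst hσ
  simp [rename, unrename, Function.comp_assoc]

/-- `tr` is a renamed version of `t`: the permutation of counters done by `t` is moved from the
matrix of `t` to the states of `tr`. The update `P_π b` uses the target renaming `π`. -/
def IsRenaming (t : Trans Q d) (tr : CTrans (Q × Equiv.Perm (Fin d)) d) : Prop :=
  ∃ τ π : Equiv.Perm (Fin d),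
    t.mat = permMat τ ∧ tr = ((t.src, τ * π), t.upd ∘ π, (t.tgt, π))

/-- `M'` is the continuous VASS of the renamed transitions of `M`. Unlike the paper's reduction, it
also makes sense of transitions that both permute and update the counters. -/
def IsRenamingReduction (M : ACV Q d) (M' : CV (Q × Equiv.Perm (Fin d)) d) : Prop :=
  ∀ tr, tr ∈ M'.T ↔ ∃ t ∈ M.T, IsRenaming t tr

theorem isRenaming_iff_of_upd_eq_zero {t : Trans Q d} (ht : t.upd = 0)
    {tr : CTrans (Q × Equiv.Perm (Fin d)) d} :
    IsRenaming t tr ↔ ∃ π π' : Equiv.Perm (Fin d), IsPermMat t.mat ∧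
      permMat π' = permMat π * t.mat⁻¹ ∧ tr = ((t.src, π), 0, (t.tgt, π')) := by
  constructor
  · rintro ⟨τ, π, hτ, rfl⟩
    exact ⟨τ * π, π, ⟨τ, hτ⟩, by rw [hτ, permMat_eq_mul_inv_iff], by rw [ht, Pi.zero_comp]⟩
  · rintro ⟨π, π', ⟨τ, hτ⟩, hπ, rfl⟩
    rw [hτ, permMat_eq_mul_inv_iff] at hπ
    exact ⟨τ, π', hτ, by rw [ht, Pi.zero_comp, hπ]⟩

theorem isRenaming_iff_of_mat_eq_one {t : Trans Q d} (ht : t.mat = 1)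
    {tr : CTrans (Q × Equiv.Perm (Fin d)) d} :
    IsRenaming t tr ↔ ∃ π : Equiv.Perm (Fin d),
      tr = ((t.src, π), (permMat π).mulVec t.upd, (t.tgt, π)) := by
  simp only [IsRenaming, ht, ← permMat_one, permMat_injective.eq_iff, permMat_mulVec,
    exists_and_left, exists_eq_left', one_mul]

theorem exists_isRenaming_iff_of_upd_eq_zero_or_mat_eq_one {M : ACV Q d}
    (hM : ∀ t ∈ M.T, t.upd = 0 ∨ t.mat = 1) (tr : CTrans (Q × Equiv.Perm (Fin d)) d) :
    (∃ t ∈ M.T, IsRenaming t tr) ↔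
      (∃ (p q : Q) (A : Mat d) (π π' : Equiv.Perm (Fin d)),
          (p, A, (0 : Fin d → ℤ), q) ∈ M.T ∧ IsPermMat A ∧
          permMat π' = permMat π * A⁻¹ ∧
          tr = ((p, π), (0 : Fin d → ℤ), (q, π'))) ∨
       (∃ (p q : Q) (b : Fin d → ℤ) (π : Equiv.Perm (Fin d)),
          (p, (1 : Mat d), b, q) ∈ M.T ∧
          tr = ((p, π), (permMat π).mulVec b, (q, π))) := by
  constructor
  · rintro ⟨⟨p, A, b, q⟩, ht, hren⟩
    rcases hM _ ht with hb | hA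
    · obtain ⟨π, π', htr⟩ := (isRenaming_iff_of_upd_eq_zero hb).1 hren
      obtain rfl : b = 0 := hb
      exact Or.inl ⟨p, q, A, π, π', ht, htr⟩
    · obtain ⟨π, htr⟩ := (isRenaming_iff_of_mat_eq_one hA).1 hren
      obtain rfl : A = 1 := hA
      exact Or.inr ⟨p, q, b, π, ht, htr⟩
  · rintro (⟨p, q, A, π, π', ht, htr⟩ | ⟨p, q, b, π, ht, htr⟩)
    · exact ⟨_, ht, (isRenaming_iff_of_upd_eq_zero rfl).2 ⟨π, π', htr⟩⟩
    · exact ⟨_, ht, (isRenaming_iff_of_mat_eq_one rfl).2 ⟨π, htr⟩⟩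

end Renaming

section Bisimulation

variable {Q : Type} {d : ℕ}

theorem nonNeg_comp_perm {u : Vec d} (σ : Equiv.Perm (Fin d)) :
    NonNeg (u ∘ σ) ↔ NonNeg u :=
  σ.forall_congr_right (q := fun i => 0 ≤ u i)

theorem comp_perm_eq_add_iff {u v : Vec d} {b : Fin d → ℤ} {α : ℚ} {τ π : Equiv.Perm (Fin d)} :
    v ∘ π = u ∘ (τ * π) + α • castVec (b ∘ π) ↔
      v = (castMat (permMat τ)).mulVec u + α • castVec b := by
  rw [castMat_permMat_mulVec]
  exact π.surjective.injective_comp_right.eq_iff (b := u ∘ τ + α • castVec b)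

theorem cvStep_rename_iff {M : ACV Q d} {M' : CV (Q × Equiv.Perm (Fin d)) d} {t : Trans Q d}
    {τ π : Equiv.Perm (Fin d)} (hτ : t.mat = permMat τ) (ht : t ∈ M.T)
    (ht' : ((t.src, τ * π), t.upd ∘ π, (t.tgt, π)) ∈ M'.T) {C C' : Conf Q d} {α : ℚ} :
    CVStep M' (rename (τ * π) C) α ((t.src, τ * π), t.upd ∘ π, (t.tgt, π)) (rename π C') ↔
      Step M C α t C' := by
  simp only [CVStep, Step, rename, ht, ht', hτ, nonNeg_comp_perm, comp_perm_eq_add_iff,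
    Prod.mk.injEq, and_true]

theorem Step.exists_cvStep_rename {M : ACV Q d} {M' : CV (Q × Equiv.Perm (Fin d)) d}
    (hperm : ∀ t ∈ M.T, IsPermMat t.mat) (hM' : IsRenamingReduction M M') {C C' : Conf Q d}
    {α : ℚ} {t : Trans Q d} (h : Step M C α t C') (ρ : Equiv.Perm (Fin d)) :
    ∃ π tr, CVStep M' (rename ρ C) α tr (rename π C') := by
  have ht : t ∈ M.T := h.1
  obtain ⟨τ, hτ⟩ := hperm t ht
  obtain ⟨π, rfl⟩ : ∃ π, ρ = τ * π := ⟨τ⁻¹ * ρ, (mul_inv_cancel_left τ ρ).symm⟩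
  have ht' := (hM' _).2 ⟨t, ht, τ, π, hτ, rfl⟩
  exact ⟨π, _, (cvStep_rename_iff hτ ht ht').2 h⟩

theorem CVStep.exists_step_unrename {M : ACV Q d} {M' : CV (Q × Equiv.Perm (Fin d)) d}
    (hM' : IsRenamingReduction M M') {D D' : Conf (Q × Equiv.Perm (Fin d)) d} {α : ℚ}
    {tr : CTrans (Q × Equiv.Perm (Fin d)) d} (h : CVStep M' D α tr D') :
    ∃ t, Step M (unrename D) α t (unrename D') := by
  have htr : tr ∈ M'.T := h.1
  obtain ⟨t, ht, τ, π, hτ, rfl⟩ := (hM' tr).1 htr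
  have hD : rename (τ * π) (unrename D) = D := rename_unrename (congrArg Prod.snd h.2.2.2.1)
  have hD' : rename π (unrename D') = D' := rename_unrename (congrArg Prod.snd h.2.2.2.2.1)
  exact ⟨t, (cvStep_rename_iff hτ ht htr).1 (by rwa [hD, hD'])⟩

theorem Reach.of_reflTransGen {M : ACV Q d} {C C' : Conf Q d} (hC' : NonNeg C'.2)
    (h : Relation.ReflTransGen (fun C C' => ∃ α t, Step M C α t C') C C') : Reach M C C' := by
  induction h using Relation.ReflTransGen.head_induction_on with
  | refl => exact ⟨[], .nil _ hC'⟩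
  | head hstep _ ih =>
    obtain ⟨α, t, hstep⟩ := hstep
    obtain ⟨s, hs⟩ := ih
    exact ⟨_, .cons hstep hs⟩

theorem Reach.exists_cvReach_rename {M : ACV Q d} {M' : CV (Q × Equiv.Perm (Fin d)) d}
    (hperm : ∀ t ∈ M.T, IsPermMat t.mat) (hM' : IsRenamingReduction M M') {C C' : Conf Q d}
    (h : Reach M C C') (ρ : Equiv.Perm (Fin d)) :
    ∃ σ, CVReach M' (rename ρ C) (rename σ C') := by
  obtain ⟨s, hs⟩ := h
  induction hs generalizing ρ with
  | nil => exact ⟨ρ, .refl⟩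
  | cons hstep _ ih =>
    obtain ⟨π, tr, htr⟩ := hstep.exists_cvStep_rename hperm hM' ρ
    obtain ⟨σ, hσ⟩ := ih π
    exact ⟨σ, .head ⟨_, tr, htr⟩ hσ⟩

theorem CVReach.reach_unrename {M : ACV Q d} {M' : CV (Q × Equiv.Perm (Fin d)) d}
    (hM' : IsRenamingReduction M M') {D D' : Conf (Q × Equiv.Perm (Fin d)) d}
    (hD' : NonNeg (unrename D').2) (h : CVReach M' D D') :
    Reach M (unrename D) (unrename D') :=
  Reach.of_reflTransGen hD' <| Relation.ReflTransGen.lift unrename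
    (fun _ _ ⟨α, _, hstep⟩ => ⟨α, hstep.exists_step_unrename hM'⟩) _ _ h

end Bisimulation

theorem permutation_vass_reduction_general {Q : Type} {d : ℕ} {M : ACV Q d}
    (hperm : ∀ t ∈ M.T, IsPermMat t.mat) {M' : CV (Q × Equiv.Perm (Fin d)) d}
    (hM' : IsRenamingReduction M M') (ρ : Equiv.Perm (Fin d)) (p q : Q) (u : Vec d) {v : Vec d}
    (hv : NonNeg v) :
    Reach M (p, u) (q, v) ↔
      ∃ σ : Equiv.Perm (Fin d), CVReach M' ((p, ρ), (castMat (permMat ρ)).mulVec u)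
        ((q, σ), (castMat (permMat σ)).mulVec v) := by
  simp only [castMat_permMat_mulVec]
  constructor
  · exact fun h => h.exists_cvReach_rename hperm hM' ρ
  · rintro ⟨σ, hσ⟩
    have hreach := CVReach.reach_unrename hM' (D := rename ρ (p, u)) (D' := rename σ (q, v))
      (by rwa [unrename_rename]) hσ
    rwa [unrename_rename, unrename_rename] at hreach

/-- affine continuous VASS with permutation matrices reduce to
continuous VASS whose states additionally record the current renaming. -/
theorem permutation_vass_reduction
    {Q : Type} [Fintype Q] {d : ℕ} (M : ACV Q d)
    (hperm : ∀ t ∈ M.T, IsPermMat t.mat)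
    (hform : ∀ t ∈ M.T, t.upd = 0 ∨ t.mat = 1)
    (M' : CV (Q × Equiv.Perm (Fin d)) d)
    (hM' : ∀ tr : CTrans (Q × Equiv.Perm (Fin d)) d, tr ∈ M'.T ↔
      ((∃ (p q : Q) (A : Mat d) (π π' : Equiv.Perm (Fin d)),
          (p, A, (0 : Fin d → ℤ), q) ∈ M.T ∧ IsPermMat A ∧
          permMat π' = permMat π * A⁻¹ ∧
          tr = ((p, π), (0 : Fin d → ℤ), (q, π'))) ∨
       (∃ (p q : Q) (b : Fin d → ℤ) (π : Equiv.Perm (Fin d)),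
          (p, (1 : Mat d), b, q) ∈ M.T ∧
          tr = ((p, π), (permMat π).mulVec b, (q, π)))))
    (p q : Q) (u v : Vec d) (hu : NonNeg u) (hv : NonNeg v) :
    Reach M (p, u) (q, v) ↔
      ∃ σ : Equiv.Perm (Fin d),
        CVReach M' ((p, 1), u) ((q, σ), (castMat (permMat σ)).mulVec v) := by
  have hren : IsRenamingReduction M M' := fun tr =>
    (hM' tr).trans (exists_isRenaming_iff_of_upd_eq_zero_or_mat_eq_one hform tr).symm
  simpa [castMat_permMat] using permutation_vass_reduction_general hperm hren 1 p q u hv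

end ACVASS
end
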